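/- The common-knowledge formula of the sender–receiver example is ⊖-monotone: over AP = {s,d,r}, the closed extended-logic formula φ_CK := ∀π∈sys. (F(r_π ∧ X r_π)) → F( fix(X, ξ₁, ξ₂). ∀π'∈X. F r_{π'} ), where ξ₁ := true → π∈X and ξ₂ := ∀π₁∈X. ∀π₂∈sys. (H(s_{π₁}↔s_{π₂}) ∨ H(r_{π₁}↔r_{π₂})) → π₂∈X, is ⊖-monotone: for every trace length m and all 𝕋 ⊆ 𝕋' ⊆ Σ^m, 𝕋 ⊭ φ_CK implies 𝕋' ⊭ φ_CK. -/

import Mathlib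

/-!
The contrapositive is proved: satisfaction of `φ_CK` passes from `T'` to a subset `T`.
The premise of the implication and the body `F r` do not depend on the system, so it
suffices that the least fixpoint over `T` lies in the one over `T'` (`solSet_mono`):
shrinking the set over which the last quantifier ranges only weakens the claim. The
inclusion holds because intersecting a solution of `ξ₁, ξ₂` over `T'` with `T` gives a
solution over `T`.
-/

namespace Hyper2LTLf

/-- A finite trace of length `m` over atomic propositions `AP`. -/
abbrev Trace (AP : Type) (m : ℕ) : Type := Fin m → Set AP

/-- Quantifier-free formulas (used as step formulas of fixpoint constraints). -/
inductive QF (AP : Type) : Type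
  | atom : AP → ℕ → QF AP
  | neg  : QF AP → QF AP
  | conj : QF AP → QF AP → QF AP
  | nxt  : QF AP → QF AP
  | prv  : QF AP → QF AP
  | untl : QF AP → QF AP → QF AP
  | snce : QF AP → QF AP → QF AP

/-- The distinguished second-order variable `sys`. -/
def sysVar : ℕ := 0

variable {AP : Type}

/-- Finite-trace satisfaction of quantifier-free formulas. -/
def SatQF {m : ℕ} : (ℕ → Trace AP m) → ℕ → QF AP → Prop
  | P, i, .atom a v => ∃ h : i < m, a ∈ P v ⟨i, h⟩
  | P, i, .neg φ => ¬ SatQF P i φ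
  | P, i, .conj φ ψ => SatQF P i φ ∧ SatQF P i ψ
  | P, i, .nxt φ => i + 1 < m ∧ SatQF P (i + 1) φ
  | P, i, .prv φ => 0 < i ∧ SatQF P (i - 1) φ
  | P, i, .untl φ ψ =>
      ∃ j, i ≤ j ∧ j < m ∧ SatQF P j ψ ∧ ∀ k, i ≤ k → k < j → SatQF P k φ
  | P, i, .snce φ ψ =>
      ∃ j, j ≤ i ∧ SatQF P j ψ ∧ ∀ k, j < k → k ≤ i → SatQF P k φ

/-- A fixpoint constraint `∀π₁∈X₁ … ∀πₙ∈Xₙ. φ_step → π ∈ X` for the set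
variable `X` of the enclosing `fix`: `binders` is the list `(π₁,X₁),…,(πₙ,Xₙ)`,
`step` is the quantifier-free formula `φ_step`, and `target` is `π`. -/
structure Constraint (AP : Type) : Type where
  binders : List (ℕ × ℕ)
  step : QF AP
  target : ℕ

/-- Satisfaction of the universally quantified implication of a constraint, where
`X` is the set variable of the enclosing `fix` (the conclusion is `P π ∈ D X`). -/
def SatBinders {m : ℕ} (D : ℕ → Set (Trace AP m)) (i : ℕ) (X : ℕ) :
    (ℕ → Trace AP m) → List (ℕ × ℕ) → QF AP → ℕ → Prop
  | P, [], step, tgt => SatQF P i step → P tgt ∈ D X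
  | P, (v, Y) :: rest, step, tgt =>
      ∀ t ∈ D Y, SatBinders D i X (Function.update P v t) rest step tgt

/-- `Π, Δ, i ⊨_𝕋 ξ` for a fixpoint constraint `ξ` of the fix-variable `X`. -/
def SatConstraint {m : ℕ} (D : ℕ → Set (Trace AP m)) (i : ℕ) (X : ℕ)
    (P : ℕ → Trace AP m) (c : Constraint AP) : Prop :=
  SatBinders D i X P c.binders c.step c.target

/-- `sol(Π,Δ,i,X,ξ₁,…,ξ_k)`: the ⊆-least subset `A` of `𝕋` with
`Π, Δ[X↦A], i ⊨_𝕋 ξ_j` for every `j`, as the intersection of all such subsets. -/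
def solSet {m : ℕ} (T : Set (Trace AP m)) (P : ℕ → Trace AP m)
    (D : ℕ → Set (Trace AP m)) (i : ℕ) (X : ℕ) (cs : List (Constraint AP)) :
    Set (Trace AP m) :=
  ⋂₀ {A : Set (Trace AP m) | A ⊆ T ∧
        ∀ c ∈ cs, SatConstraint (Function.update D X A) i X P c}

/-- Syntax of the extended logic Hyper²LTL_f with the `fix` construct. -/
inductive FormulaX (AP : Type) : Type
  | atom  : AP → ℕ → FormulaX AP
  | neg   : FormulaX AP → FormulaX AP
  | conj  : FormulaX AP → FormulaX AP → FormulaX AP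
  | nxt   : FormulaX AP → FormulaX AP
  | prv   : FormulaX AP → FormulaX AP
  | untl  : FormulaX AP → FormulaX AP → FormulaX AP
  | snce  : FormulaX AP → FormulaX AP → FormulaX AP
  | exFO  : ℕ → ℕ → FormulaX AP → FormulaX AP   -- ∃ π ∈ X. φ
  | allFO : ℕ → ℕ → FormulaX AP → FormulaX AP   -- ∀ π ∈ X. φ
  | exSO  : ℕ → FormulaX AP → FormulaX AP        -- ∃ X. φ
  | allSO : ℕ → FormulaX AP → FormulaX AP        -- ∀ X. φ
  | fix   : ℕ → List (Constraint AP) → FormulaX AP → FormulaX AP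
      -- fix(X, ξ₁, …, ξ_k). φ

/-- Finite-trace satisfaction `Π, Δ, i ⊨_𝕋 φ` for the extended logic. -/
def SatX {m : ℕ} (T : Set (Trace AP m)) :
    (ℕ → Trace AP m) → (ℕ → Set (Trace AP m)) → ℕ → FormulaX AP → Prop
  | P, _, i, .atom a v => ∃ h : i < m, a ∈ P v ⟨i, h⟩
  | P, D, i, .neg φ => ¬ SatX T P D i φ
  | P, D, i, .conj φ ψ => SatX T P D i φ ∧ SatX T P D i ψ
  | P, D, i, .nxt φ => i + 1 < m ∧ SatX T P D (i + 1) φ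
  | P, D, i, .prv φ => 0 < i ∧ SatX T P D (i - 1) φ
  | P, D, i, .untl φ ψ =>
      ∃ j, i ≤ j ∧ j < m ∧ SatX T P D j ψ ∧ ∀ k, i ≤ k → k < j → SatX T P D k φ
  | P, D, i, .snce φ ψ =>
      ∃ j, j ≤ i ∧ SatX T P D j ψ ∧ ∀ k, j < k → k ≤ i → SatX T P D k φ
  | P, D, i, .exFO v X φ => ∃ t ∈ D X, SatX T (Function.update P v t) D i φ
  | P, D, i, .allFO v X φ => ∀ t ∈ D X, SatX T (Function.update P v t) D i φ
  | P, D, i, .exSO X φ =>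
      ∃ A : Set (Trace AP m), A ⊆ T ∧ SatX T P (Function.update D X A) i φ
  | P, D, i, .allSO X φ =>
      ∀ A : Set (Trace AP m), A ⊆ T → SatX T P (Function.update D X A) i φ
  | P, D, i, .fix X cs φ =>
      SatX T P (Function.update D X (solSet T P D i X cs)) i φ

/-- Top-level satisfaction: `𝕋 ⊨ φ` iff `∅, [sys ↦ 𝕋], 0 ⊨_𝕋 φ`. -/
def ModelsX {m : ℕ} (T : Set (Trace AP m)) (φ : FormulaX AP) : Prop :=
  SatX T (fun _ _ => (∅ : Set AP)) (fun X => if X = sysVar then T else ∅) 0 φ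

/-- Trace variables occurring in a quantifier-free formula. -/
def qfTV : QF AP → Set ℕ
  | .atom _ v => {v}
  | .neg φ => qfTV φ
  | .nxt φ => qfTV φ
  | .prv φ => qfTV φ
  | .conj φ ψ => qfTV φ ∪ qfTV ψ
  | .untl φ ψ => qfTV φ ∪ qfTV ψ
  | .snce φ ψ => qfTV φ ∪ qfTV ψ

/-- Free trace variables of a fixpoint constraint. -/
def freeTVC (c : Constraint AP) : Set ℕ :=
  (qfTV c.step ∪ {c.target}) \ {v | ∃ p ∈ c.binders, p.1 = v}

/-- Set variables occurring in a fixpoint constraint (its binders). -/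
def svC (c : Constraint AP) : Set ℕ := {Y | ∃ p ∈ c.binders, p.2 = Y}

/-- Free trace variables. -/
def freeTVX : FormulaX AP → Set ℕ
  | .atom _ v => {v}
  | .neg φ => freeTVX φ
  | .nxt φ => freeTVX φ
  | .prv φ => freeTVX φ
  | .conj φ ψ => freeTVX φ ∪ freeTVX ψ
  | .untl φ ψ => freeTVX φ ∪ freeTVX ψ
  | .snce φ ψ => freeTVX φ ∪ freeTVX ψ
  | .exFO v _ φ => freeTVX φ \ {v}
  | .allFO v _ φ => freeTVX φ \ {v}
  | .exSO _ φ => freeTVX φ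
  | .allSO _ φ => freeTVX φ
  | .fix _ cs φ => freeTVX φ ∪ {v | ∃ c ∈ cs, v ∈ freeTVC c}

/-- Free set variables. -/
def freeSVX : FormulaX AP → Set ℕ
  | .atom _ _ => ∅
  | .neg φ => freeSVX φ
  | .nxt φ => freeSVX φ
  | .prv φ => freeSVX φ
  | .conj φ ψ => freeSVX φ ∪ freeSVX ψ
  | .untl φ ψ => freeSVX φ ∪ freeSVX ψ
  | .snce φ ψ => freeSVX φ ∪ freeSVX ψ
  | .exFO _ X φ => insert X (freeSVX φ)
  | .allFO _ X φ => insert X (freeSVX φ)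
  | .exSO X φ => freeSVX φ \ {X}
  | .allSO X φ => freeSVX φ \ {X}
  | .fix X cs φ => (freeSVX φ ∪ {Y | ∃ c ∈ cs, Y ∈ svC c}) \ {X}

/-- A formula is closed if it has no free trace variables and its only
(possibly) free set variable is `sys`. -/
def ClosedX (φ : FormulaX AP) : Prop := freeTVX φ = ∅ ∧ freeSVX φ ⊆ {sysVar}

/-- `⊕`-monotonicity. -/
def PlusMonotoneX (φ : FormulaX AP) : Prop :=
  ∀ (m : ℕ) (T T' : Set (Trace AP m)), T ⊆ T' → ModelsX T φ → ModelsX T' φ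

/-- `⊖`-monotonicity. -/
def MinusMonotoneX (φ : FormulaX AP) : Prop :=
  ∀ (m : ℕ) (T T' : Set (Trace AP m)), T ⊆ T' → ¬ ModelsX T φ → ¬ ModelsX T' φ

/-- The atomic propositions of the sender–receiver example: `AP = {s, d, r}`. -/
inductive AP3 : Type
  | s | d | r
deriving DecidableEq

instance : Fintype AP3 :=
  ⟨⟨{AP3.s, AP3.d, AP3.r}, by decide⟩, by intro x; cases x <;> decide⟩

/-- A quantifier-free formula that is true in every context. -/
def qtt : QF AP3 := .neg (.conj (.atom .s 0) (.neg (.atom .s 0)))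

/-- Quantifier-free implication `φ → ψ := ¬(φ ∧ ¬ψ)`. -/
def qimpl (φ ψ : QF AP3) : QF AP3 := .neg (.conj φ (.neg ψ))

/-- Quantifier-free equivalence. -/
def qiff (φ ψ : QF AP3) : QF AP3 := .conj (qimpl φ ψ) (qimpl ψ φ)

/-- Quantifier-free disjunction. -/
def qor (φ ψ : QF AP3) : QF AP3 := .neg (.conj (.neg φ) (.neg ψ))

/-- Quantifier-free `historically`: `H φ := ¬(true S ¬φ)`. -/
def qH (φ : QF AP3) : QF AP3 := .neg (.snce qtt (.neg φ))

/-- A formula of the extended logic that is true in every context. -/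
def ttX : FormulaX AP3 := .neg (.conj (.atom .s 0) (.neg (.atom .s 0)))

/-- Eventually: `F φ := true U φ`. -/
def FX (φ : FormulaX AP3) : FormulaX AP3 := .untl ttX φ

/-- Implication `φ → ψ := ¬(φ ∧ ¬ψ)`. -/
def implX (φ ψ : FormulaX AP3) : FormulaX AP3 := .neg (.conj φ (.neg ψ))

/-- The fixpoint constraint `ξ₁ := true → π ∈ X`, with `π` the trace variable `0`
(bound by the outermost `∀π∈sys`). -/
def xi1 : Constraint AP3 := ⟨[], qtt, 0⟩

/-- The fixpoint constraint
`ξ₂ := ∀π₁∈X. ∀π₂∈sys. (H(s_{π₁}↔s_{π₂}) ∨ H(r_{π₁}↔r_{π₂})) → π₂ ∈ X`,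
with `π₁, π₂` the trace variables `2, 3` and `X` the set variable `1`. -/
def xi2 : Constraint AP3 :=
  ⟨[(2, 1), (3, sysVar)],
   qor (qH (qiff (.atom .s 2) (.atom .s 3))) (qH (qiff (.atom .r 2) (.atom .r 3))),
   3⟩

/-- The common-knowledge formula
`φ_CK := ∀π∈sys. (F(r_π ∧ X r_π)) → F( fix(X, ξ₁, ξ₂). ∀π'∈X. F r_{π'} )`,
with `π, π'` the trace variables `0, 1` and `X` the set variable `1`. -/
def phiCK : FormulaX AP3 :=
  .allFO 0 sysVar
    (implX (FX (.conj (.atom .r 0) (.nxt (.atom .r 0))))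
      (FX (.fix 1 [xi1, xi2] (.allFO 1 1 (FX (.atom .r 1))))))

/-- The least solution of `ξ₁, ξ₂` is monotone in the system, as long as the trace bound
to the outer variable `π` belongs to the smaller system. -/
theorem solSet_mono {m : ℕ} {T T' : Set (Trace AP3 m)} (hT : T ⊆ T')
    {P : ℕ → Trace AP3 m} (hP : P 0 ∈ T) {D D' : ℕ → Set (Trace AP3 m)}
    (hD : D sysVar = T) (hD' : D' sysVar = T') (j : ℕ) :
    solSet T P D j 1 [xi1, xi2] ⊆ solSet T' P D' j 1 [xi1, xi2] := by
  rintro t ht A' ⟨-, hA'⟩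
  have h1 : P 0 ∈ A' := by
    have := hA' xi1 (by simp)
    simpa [SatConstraint, xi1, SatBinders, qtt, SatQF] using this
  have h2 := hA' xi2 (by simp)
  -- The restriction of a solution over the larger system solves the constraints over `T`.
  refine (ht (A' ∩ T) ⟨Set.inter_subset_right, ?_⟩).1
  intro c hc
  simp only [List.mem_cons, List.not_mem_nil, or_false] at hc
  rcases hc with rfl | rfl
  · intro _
    exact ⟨h1, hP⟩
  · intro t₁ ht₁ t₂ ht₂ hstep
    have e : t₂ ∈ T := by
      have : Function.update D 1 (A' ∩ T) sysVar = T := by simpa [sysVar] using hD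
      exact this ▸ ht₂
    have e' : t₂ ∈ Function.update D' 1 A' sysVar := by
      have : Function.update D' 1 A' sysVar = T' := by simpa [sysVar] using hD'
      exact this ▸ hT e
    have ht₁' : t₁ ∈ Function.update D' 1 A' 1 := by
      simp only [Function.update_self] at ht₁ ⊢
      exact ht₁.1
    have := h2 t₁ ht₁' t₂ e' hstep
    simp [xi2, Function.update_self] at this ⊢
    exact ⟨this, e⟩

/-- the common-knowledge formula `φ_CK` of the sender–receiver
example is ⊖-monotone. -/
theorem phiCK_minusMonotone : MinusMonotoneX phiCK := by
  intro m T T' hT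
  refine mt fun h t ht => ?_
  rintro ⟨hprem, hnot⟩
  apply hnot
  have ht' : t ∈ T := by simpa [sysVar] using ht
  have hconc := not_not.mp fun hn =>
    h t (by simpa [sysVar] using hT ht') ⟨hprem, hn⟩
  obtain ⟨j, h0j, hjm, hfix, -⟩ := hconc
  refine ⟨j, h0j, hjm, ?_, fun k _ _ hk => hk.2 hk.1⟩
  -- The time point that witnesses the outer `F` for the larger system is reused for `T`.
  intro u hu
  refine hfix u ?_
  rw [Function.update_self] at hu ⊢
  exact solSet_mono hT (by simpa using ht') (by simp) (by simp) j hu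

end Hyper2LTLf
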